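/- Let 0 < ν < 1 and let f : ℝ → ℝ be bounded and continuous. Define for t > 0 the space convolution u(x,t) = ∫_{−∞}^{+∞} (1/(2 t^ν)) M_ν(|ξ|/t^ν) f(x−ξ) dξ. Then for every x ∈ ℝ, u(x,t) → f(x) as t → 0⁺; that is, the convolution solution of the Cauchy problem attains the initial datum u(x,0⁺) = f(x). -/

import Mathlib

open MeasureTheory

/-- The M-Wright function of order `ν ∈ [0,1)`:
`M_ν(z) = Σ_{n=0}^∞ (-z)ⁿ / (n! Γ(-νn + 1 - ν))`. Terms where `Γ` is evaluated at a
nonpositive integer are zero, since `Real.Gamma` vanishes at its poles. -/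
noncomputable def mWright (ν z : ℝ) : ℝ :=
  ∑' n : ℕ, (-z) ^ n / (n.factorial * Real.Gamma (-(ν * n) + 1 - ν))

/-!
Collapsing the Hankel contour of `1 / Γ` onto a ray along which both exponentials decay writes
`π * M_ν(z)` as the imaginary part of `∫ w t^(ν-1) e^(-t/w) e^(-z w t^ν) dt`, `w = e^(iπν/(1+ν))`;
term by term this is Euler's integral for `Γ` and the reflection formula. The integrand is not
jointly integrable in `z, t > 0`, but subtracting the same integral with `e^(-t/w)` replaced by
`e^(-w t^ν)`, which is real, makes Fubini's theorem applicable. Integrating out `z` leaves a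
Frullani integral with imaginary part `π`, so `M_ν` has integral `1` on the half-line. The
convolution kernel is thus a dilated approximate identity, and dominated convergence concludes.
-/

open Complex Filter Set Topology
open scoped Real

theorem eqOn_re_pos_of_eq_ofReal {f g : ℂ → ℂ} (hf : DifferentiableOn ℂ f {z | 0 < z.re})
    (hg : DifferentiableOn ℂ g {z | 0 < z.re}) (h : ∀ r : ℝ, 0 < r → f r = g r) :
    EqOn f g {z | 0 < z.re} := by
  have hopen : IsOpen {z : ℂ | 0 < z.re} := isOpen_lt continuous_const continuous_re
  refine (hf.analyticOnNhd hopen).eqOn_of_preconnected_of_frequently_eq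
    (hg.analyticOnNhd hopen) (convex_halfSpace_re_gt 0).isPreconnected (z₀ := 1) (by simp) ?_
  have hreal : Tendsto ((↑) : ℝ → ℂ) (𝓝[≠] 1) (𝓝[≠] 1) := by
    refine tendsto_nhdsWithin_iff.2 ⟨?_, ?_⟩
    · exact (continuous_ofReal.tendsto' 1 1 ofReal_one).mono_left nhdsWithin_le_nhds
    · exact eventually_mem_nhdsWithin.mono fun r hr ↦ by simpa using hr
  exact hreal.frequently
    (eventually_nhdsWithin_of_eventually_nhds ((lt_mem_nhds one_pos).mono h)).frequently

theorem integrableOn_rpow_mul_cexp_neg_mul_rpow {s μ : ℝ} (hs : -1 < s) (hμ : 0 < μ) {r : ℂ}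
    (hr : 0 < r.re) :
    IntegrableOn (fun t : ℝ ↦ ((t ^ s : ℝ) : ℂ) * cexp (-(r * (t ^ μ : ℝ)))) (Ioi 0) := by
  refine (integrableOn_rpow_mul_exp_neg_mul_rpow hs hμ hr).mono'
    (Measurable.aestronglyMeasurable (by fun_prop)) ?_
  filter_upwards [ae_restrict_mem measurableSet_Ioi] with t (ht : 0 < t)
  rw [norm_mul, norm_real, norm_exp, Real.norm_of_nonneg (by positivity), neg_re, re_mul_ofReal,
    neg_mul]

theorem differentiableOn_integral_rpow_mul_cexp_neg_mul {s : ℝ} (hs : -1 < s) :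
    DifferentiableOn ℂ (fun r : ℂ ↦ ∫ t in Ioi (0 : ℝ), ((t ^ s : ℝ) : ℂ) * cexp (-(r * t)))
      {r | 0 < r.re} := by
  let μ : Measure ℝ :=
    (volume.restrict (Ioi 0)).withDensity fun t ↦ (Real.toNNReal (t ^ s) : ENNReal)
  have hμ : Measurable fun t : ℝ ↦ Real.toNNReal (t ^ s) := by fun_prop
  have hmgf (r : ℂ) : ProbabilityTheory.complexMGF id μ (-r) =
      ∫ t in Ioi (0 : ℝ), ((t ^ s : ℝ) : ℂ) * cexp (-(r * t)) := by
    rw [ProbabilityTheory.complexMGF, integral_withDensity_eq_integral_smul hμ]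
    refine setIntegral_congr_fun measurableSet_Ioi fun t (ht : 0 < t) ↦ ?_
    simp [NNReal.smul_def, Real.coe_toNNReal _ (Real.rpow_nonneg ht.le s)]
  have hexp : Iio 0 ⊆ ProbabilityTheory.integrableExpSet id μ := fun x (hx : x < 0) ↦ by
    rw [ProbabilityTheory.integrableExpSet, mem_ofPred_eq,
      integrable_withDensity_iff_integrable_smul hμ]
    refine (integrableOn_rpow_mul_exp_neg_mul_rpow hs one_pos (neg_pos.2 hx)).congr_fun
      (fun t (ht : 0 < t) ↦ ?_) measurableSet_Ioi
    simp [NNReal.smul_def, Real.coe_toNNReal _ (Real.rpow_nonneg ht.le s)]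
  have hmaps : MapsTo Neg.neg {r : ℂ | 0 < r.re}
      {z | z.re ∈ interior (ProbabilityTheory.integrableExpSet id μ)} := fun r hr ↦
    interior_maximal hexp isOpen_Iio (by simpa using hr)
  simpa only [Function.comp_def, hmgf] using
    ProbabilityTheory.differentiableOn_complexMGF.comp differentiable_neg.differentiableOn hmaps

theorem integral_rpow_mul_cexp_neg_mul {a : ℝ} (ha : 0 < a) {r : ℂ} (hr : 0 < r.re) :
    ∫ t in Ioi (0 : ℝ), ((t ^ (a - 1) : ℝ) : ℂ) * cexp (-(r * t)) =
      Gamma a * (1 / r) ^ (a : ℂ) := by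
  refine eqOn_re_pos_of_eq_ofReal (g := fun r ↦ Gamma a * (1 / r) ^ (a : ℂ))
    (differentiableOn_integral_rpow_mul_cexp_neg_mul (by linarith : -1 < a - 1))
    (fun w (hw : 0 < w.re) ↦ ?_) (fun x hx ↦ ?_) hr
  · have hw0 : w ≠ 0 := ne_zero_of_re_pos hw
    have hslit : 1 / w ∈ slitPlane :=
      .inl (by simpa only [one_div, inv_re] using div_pos hw (normSq_pos.2 hw0))
    exact ((((differentiableAt_const _).div differentiableAt_id hw0).cpow_const
      hslit).const_mul _).differentiableWithinAt
  · rw [mul_comm, ← integral_cpow_mul_exp_neg_mul_Ioi (by simpa using ha) hx]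
    refine setIntegral_congr_fun measurableSet_Ioi fun t (ht : 0 < t) ↦ ?_
    rw [ofReal_cpow ht.le, ofReal_sub, ofReal_one]

theorem integral_rpow_mul_cexp_neg_mul_rpow {a μ : ℝ} (ha : 0 < a) (hμ : 0 < μ) {r : ℂ}
    (hr : 0 < r.re) :
    ∫ t in Ioi (0 : ℝ), ((t ^ (a - 1) : ℝ) : ℂ) * cexp (-(r * (t ^ μ : ℝ))) =
      μ⁻¹ * Gamma (a / μ : ℝ) * (1 / r) ^ ((a / μ : ℝ) : ℂ) := by
  rw [mul_assoc, ← integral_rpow_mul_cexp_neg_mul (div_pos ha hμ) hr,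
    ← integral_comp_rpow_Ioi_of_pos
      (g := fun t : ℝ ↦ ((t ^ (a / μ - 1) : ℝ) : ℂ) * cexp (-(r * t))) hμ, ← integral_const_mul]
  refine setIntegral_congr_fun measurableSet_Ioi fun t (ht : 0 < t) ↦ ?_
  have hpow : t ^ (a - 1) = t ^ (μ - 1) * (t ^ μ) ^ (a / μ - 1) := by
    rw [← Real.rpow_mul ht.le, ← Real.rpow_add ht]
    field_simp
    ring_nf
  have hμ' : (μ : ℂ) ≠ 0 := mod_cast hμ.ne'
  simp only [hpow, real_smul]
  push_cast
  field_simp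

theorem log_inv_of_re_pos {z : ℂ} (hz : 0 < z.re) : log z⁻¹ = -log z :=
  log_inv _ (slitPlane_arg_ne_pi (.inl hz))

theorem norm_cexp_sub_cexp_le {a b : ℂ} (ha : a.re ≤ 0) (hb : b.re ≤ 0) :
    ‖cexp a - cexp b‖ ≤ ‖a - b‖ := by
  have := (convex_halfSpace_re_le (0 : ℝ)).norm_image_sub_le_of_norm_hasDerivWithin_le
    (f := cexp) (f' := cexp) (C := 1) (fun x _ ↦ (hasDerivAt_exp x).hasDerivWithinAt)
    (fun x (hx : x.re ≤ 0) ↦ by simpa [norm_exp] using hx) hb ha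
  simpa using this

theorem tendsto_integral_rpow_mul {g : ℝ → ℂ} (hg : IntegrableOn g (Ioi 0))
    (hg' : IntegrableOn (fun t : ℝ ↦ t * g t) (Ioi 0)) :
    Tendsto (fun ε : ℝ ↦ ∫ t in Ioi (0 : ℝ), ((t ^ ε : ℝ) : ℂ) * g t) (𝓝[>] 0)
      (𝓝 (∫ t in Ioi (0 : ℝ), g t)) := by
  refine tendsto_integral_filter_of_dominated_convergence (fun t ↦ ‖g t‖ + ‖t * g t‖)
    (.of_forall fun ε ↦ ?_) ?_ (hg.norm.add hg'.norm) ?_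
  · exact (Measurable.aestronglyMeasurable (by fun_prop)).mul hg.aestronglyMeasurable
  · filter_upwards [Ioc_mem_nhdsGT one_pos] with ε hε
    filter_upwards [ae_restrict_mem measurableSet_Ioi] with t (ht : 0 < t)
    have hpow : t ^ ε ≤ 1 + t := by
      rcases le_total t 1 with h | h
      · linarith [Real.rpow_le_one ht.le h hε.1.le]
      · linarith [Real.rpow_le_self_of_one_le h hε.2]
    calc ‖((t ^ ε : ℝ) : ℂ) * g t‖ = t ^ ε * ‖g t‖ := by
          rw [norm_mul, norm_real, Real.norm_of_nonneg (by positivity)]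
      _ ≤ (1 + t) * ‖g t‖ := by gcongr
      _ = ‖g t‖ + ‖t * g t‖ := by
          rw [norm_mul, norm_real, Real.norm_of_nonneg ht.le]
          ring
  · filter_upwards [ae_restrict_mem measurableSet_Ioi] with t (ht : 0 < t)
    have hcont : Continuous fun ε : ℝ ↦ ((t ^ ε : ℝ) : ℂ) :=
      continuous_ofReal.comp (Real.continuous_const_rpow ht.ne')
    have hpow : Tendsto (fun ε : ℝ ↦ ((t ^ ε : ℝ) : ℂ)) (𝓝[>] 0) (𝓝 1) :=
      (hcont.tendsto' 0 1 (by simp)).mono_left nhdsWithin_le_nhds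
    simpa using hpow.mul_const (g t)

/-- The integrand of `∫ t > 0, (e^(-r t) - e^(-w t^ν)) / t`, a Frullani integral whose two
exponentials decay in different powers of `t`. Its value at `t = 0` is immaterial. -/
noncomputable def frullaniIntegrand (ν : ℝ) (r w : ℂ) (t : ℝ) : ℂ :=
  (cexp (-(r * t)) - cexp (-(w * (t ^ ν : ℝ)))) / t

section Frullani

variable {ν : ℝ} {r w : ℂ}

@[fun_prop]
theorem measurable_frullaniIntegrand : Measurable (frullaniIntegrand ν r w) := by
  unfold frullaniIntegrand
  fun_prop

theorem integrableOn_rpow_mul_frullaniIntegrand {ε : ℝ} (hε : 0 < ε) (hν : 0 < ν)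
    (hr : 0 < r.re) (hw : 0 < w.re) :
    IntegrableOn (fun t : ℝ ↦ ((t ^ ε : ℝ) : ℂ) * frullaniIntegrand ν r w t) (Ioi 0) := by
  have hε' : -1 < ε - 1 := by linarith
  have hdiff := (integrableOn_rpow_mul_cexp_neg_mul_rpow hε' one_pos hr).sub
    (integrableOn_rpow_mul_cexp_neg_mul_rpow hε' hν hw)
  refine hdiff.congr_fun (fun t (ht : 0 < t) ↦ ?_) measurableSet_Ioi
  have ht' : (t : ℂ) ≠ 0 := mod_cast ht.ne'
  simp only [Pi.sub_apply, Real.rpow_one, Real.rpow_sub_one ht.ne', frullaniIntegrand]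
  push_cast
  field_simp

theorem integral_rpow_mul_frullaniIntegrand {ε : ℝ} (hε : 0 < ε) (hν : 0 < ν)
    (hr : 0 < r.re) (hw : 0 < w.re) :
    ∫ t in Ioi (0 : ℝ), ((t ^ ε : ℝ) : ℂ) * frullaniIntegrand ν r w t =
      Gamma ε * (1 / r) ^ (ε : ℂ) - ν⁻¹ * Gamma (ε / ν : ℝ) * (1 / w) ^ ((ε / ν : ℝ) : ℂ) := by
  have hε' : -1 < ε - 1 := by linarith
  have hint : IntegrableOn (fun t : ℝ ↦ ((t ^ (ε - 1) : ℝ) : ℂ) * cexp (-(r * t))) (Ioi 0) := by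
    simpa using integrableOn_rpow_mul_cexp_neg_mul_rpow hε' one_pos hr
  rw [← integral_rpow_mul_cexp_neg_mul hε hr, ← integral_rpow_mul_cexp_neg_mul_rpow hε hν hw,
    ← integral_sub hint (integrableOn_rpow_mul_cexp_neg_mul_rpow hε' hν hw)]
  refine setIntegral_congr_fun measurableSet_Ioi fun t (ht : 0 < t) ↦ ?_
  have ht' : (t : ℂ) ≠ 0 := mod_cast ht.ne'
  simp only [Real.rpow_sub_one ht.ne', frullaniIntegrand]
  push_cast
  field_simp

theorem norm_frullaniIntegrand_le {t : ℝ} (ht : 0 < t) (hr : 0 < r.re) (hw : 0 < w.re) :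
    ‖frullaniIntegrand ν r w t‖ ≤ ‖r‖ + ‖w‖ * t ^ (ν - 1) := by
  have hre {z : ℂ} (hz : 0 < z.re) {x : ℝ} (hx : 0 ≤ x) : (-(z * x)).re ≤ 0 := by
    simpa using mul_nonneg hz.le hx
  have hnorm (z : ℂ) {x : ℝ} (hx : 0 ≤ x) : ‖z * x‖ = ‖z‖ * x := by
    rw [norm_mul, norm_real, Real.norm_of_nonneg hx]
  have htν : 0 ≤ t ^ ν := by positivity
  rw [frullaniIntegrand, norm_div, norm_real, Real.norm_of_nonneg ht.le, div_le_iff₀ ht]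
  calc ‖cexp (-(r * t)) - cexp (-(w * (t ^ ν : ℝ)))‖
      ≤ ‖-(r * t) - -(w * (t ^ ν : ℝ))‖ := norm_cexp_sub_cexp_le (hre hr ht.le) (hre hw htν)
    _ ≤ ‖r * t‖ + ‖w * (t ^ ν : ℝ)‖ := by simpa using norm_sub_le (-(r * t)) (-(w * (t ^ ν : ℝ)))
    _ = (‖r‖ + ‖w‖ * t ^ (ν - 1)) * t := by
      rw [hnorm r ht.le, hnorm w htν, Real.rpow_sub_one ht.ne']
      field_simp

theorem integrableOn_frullaniIntegrand (hν : 0 < ν) (hr : 0 < r.re) (hw : 0 < w.re) :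
    IntegrableOn (frullaniIntegrand ν r w) (Ioi 0) := by
  have hmeas : Measurable (frullaniIntegrand ν r w) := measurable_frullaniIntegrand
  rw [← Ioc_union_Ioi_eq_Ioi zero_le_one, integrableOn_union]
  constructor
  · have hbound : IntegrableOn (fun t : ℝ ↦ ‖r‖ + ‖w‖ * t ^ (ν - 1)) (Ioc 0 1) := by
      rw [← intervalIntegrable_iff_integrableOn_Ioc_of_le zero_le_one]
      exact intervalIntegrable_const.add
        ((intervalIntegral.intervalIntegrable_rpow' (by linarith)).const_mul _)
    refine hbound.mono' hmeas.aestronglyMeasurable ?_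
    filter_upwards [ae_restrict_mem measurableSet_Ioc] with t ht
    exact norm_frullaniIntegrand_le ht.1 hr hw
  · refine Integrable.mono ((integrableOn_rpow_mul_frullaniIntegrand one_pos hν hr hw).mono_set
      (Ioi_subset_Ioi zero_le_one)) hmeas.aestronglyMeasurable ?_
    filter_upwards [ae_restrict_mem measurableSet_Ioi] with t (ht : 1 < t)
    rw [norm_mul, norm_real, Real.rpow_one, Real.norm_of_nonneg (zero_le_one.trans ht.le)]
    exact le_mul_of_one_le_left (norm_nonneg _) ht.le

theorem hasDerivAt_Gamma_mul_add_one_mul_cpow (c : ℝ) {z : ℂ} (hz : z ≠ 0) :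
    HasDerivAt (fun ε : ℝ ↦ Gamma (c * ε + 1) * z ^ (c * ε : ℂ))
      (c * (log z - Real.eulerMascheroniConstant)) 0 := by
  have hlin : HasDerivAt (fun ε : ℂ ↦ c * ε) c (0 : ℝ) := by
    simpa using! (hasDerivAt_id ((0 : ℝ) : ℂ)).const_mul (c : ℂ)
  have hGamma : HasDerivAt Gamma (-Real.eulerMascheroniConstant) (c * (0 : ℝ) + 1) := by
    simpa using hasDerivAt_Gamma_one
  refine (((hGamma.comp ((0 : ℝ) : ℂ) (hlin.add_const 1)).mul
    (hlin.const_cpow (.inl hz))).comp_ofReal).congr_deriv ?_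
  simp only [neg_mul, ofReal_zero, mul_zero, cpow_zero, mul_one, Function.comp_apply, zero_add,
    Gamma_one, one_mul]
  ring

theorem Gamma_mul_cpow_eq_div {a : ℝ} (ha : a ≠ 0) (z : ℂ) :
    Gamma a * z ^ (a : ℂ) = Gamma (a + 1) * z ^ (a : ℂ) / a := by
  have ha' : (a : ℂ) ≠ 0 := mod_cast ha
  rw [Gamma_add_one _ ha']
  field_simp

theorem integral_frullaniIntegrand (hν : 0 < ν) (hr : 0 < r.re) (hw : 0 < w.re) :
    ∫ t in Ioi (0 : ℝ), frullaniIntegrand ν r w t =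
      ν⁻¹ * log w - log r + (ν⁻¹ - 1) * Real.eulerMascheroniConstant := by
  have hderiv :=
    (hasDerivAt_Gamma_mul_add_one_mul_cpow 1 (one_div_ne_zero (ne_zero_of_re_pos hr))).sub
      (hasDerivAt_Gamma_mul_add_one_mul_cpow ν⁻¹ (one_div_ne_zero (ne_zero_of_re_pos hw)))
  -- The halves of the integrand diverge separately at `0`; the factor `t ^ ε` regularizes them, and
  -- as `ε → 0` the difference of their Gamma integrals is the difference quotient of `hderiv`.
  have hslope := hderiv.tendsto_slope_zero_right
  have hmellin := tendsto_integral_rpow_mul (integrableOn_frullaniIntegrand hν hr hw)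
    (by simpa using integrableOn_rpow_mul_frullaniIntegrand one_pos hν hr hw)
  refine (tendsto_nhds_unique hmellin (hslope.congr' ?_)).trans ?_
  · filter_upwards [self_mem_nhdsWithin] with ε (hε : 0 < ε)
    have hε' : (ε : ℂ) ≠ 0 := mod_cast hε.ne'
    have hν' : (ν : ℂ) ≠ 0 := mod_cast hν.ne'
    rw [integral_rpow_mul_frullaniIntegrand hε hν hr hw, Gamma_mul_cpow_eq_div hε.ne', mul_assoc,
      Gamma_mul_cpow_eq_div (div_pos hε hν).ne']
    simp only [ofReal_one, one_mul, one_div, ofReal_inv, zero_add, Pi.sub_apply, ofReal_zero,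
      Gamma_one, cpow_zero, mul_one, mul_zero, sub_self, sub_zero, real_smul, ofReal_div]
    field_simp
  · rw [one_div, one_div, log_inv_of_re_pos hr, log_inv_of_re_pos hw]
    push_cast
    ring

end Frullani

section Fubini

variable {X : Type*} [MeasurableSpace X] {μ : Measure X} {a g : X → ℂ} {K : ℝ}

theorem integral_Ioi_mul_mul_cexp_neg_mul {b : ℂ} (hb : 0 < b.re) (c : ℂ) :
    ∫ z in Ioi (0 : ℝ), b * c * cexp (-(b * z)) = c := by
  have hb0 : b ≠ 0 := ne_zero_of_re_pos hb
  simp only [← neg_mul]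
  rw [integral_const_mul, integral_exp_mul_complex_Ioi (by simpa using hb)]
  simp [field]

theorem integral_Ioi_norm_mul_mul_cexp_neg_mul {b : ℂ} (hb : 0 < b.re) (c : ℂ) :
    ∫ z in Ioi (0 : ℝ), ‖b * c * cexp (-(b * z))‖ = ‖b‖ / b.re * ‖c‖ := by
  simp only [norm_mul, norm_exp, neg_re, re_mul_ofReal, ← neg_mul]
  rw [integral_const_mul, integral_exp_mul_Ioi (by simpa using hb)]
  simp [field]

theorem integrable_prod_mul_mul_cexp_neg_mul [SFinite μ] (ha : AEStronglyMeasurable a μ)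
    (hre : ∀ᵐ x ∂μ, 0 < (a x).re) (hsector : ∀ᵐ x ∂μ, ‖a x‖ ≤ K * (a x).re)
    (hg : Integrable g μ) :
    Integrable (fun y : ℝ × X ↦ a y.2 * g y.2 * cexp (-(a y.2 * y.1)))
      ((volume.restrict (Ioi 0)).prod μ) := by
  have hmeas : AEStronglyMeasurable (fun y : ℝ × X ↦ a y.2 * g y.2 * cexp (-(a y.2 * y.1)))
      ((volume.restrict (Ioi 0)).prod μ) := by
    have hfst : AEStronglyMeasurable (fun y : ℝ × X ↦ (y.1 : ℂ))
        ((volume.restrict (Ioi 0)).prod μ) := (by fun_prop : Measurable _).aestronglyMeasurable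
    exact (ha.comp_snd.mul hg.aestronglyMeasurable.comp_snd).mul
      (continuous_exp.comp_aestronglyMeasurable (ha.comp_snd.mul hfst).neg)
  refine (integrable_prod_iff' hmeas).2 ⟨?_, (hg.norm.const_mul K).mono'
    hmeas.norm.prod_swap.integral_prod_right' ?_⟩
  · filter_upwards [hre] with x hx
    simp only [← neg_mul]
    exact (integrableOn_exp_mul_complex_Ioi (by simpa using hx) 0).const_mul _
  · filter_upwards [hre, hsector] with x hx hK
    rw [integral_Ioi_norm_mul_mul_cexp_neg_mul hx, Real.norm_of_nonneg (by positivity)]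
    gcongr
    exact (div_le_iff₀ hx).2 hK

theorem integral_Ioi_integral_mul_mul_cexp_neg_mul [SFinite μ] (ha : AEStronglyMeasurable a μ)
    (hre : ∀ᵐ x ∂μ, 0 < (a x).re) (hsector : ∀ᵐ x ∂μ, ‖a x‖ ≤ K * (a x).re)
    (hg : Integrable g μ) :
    ∫ z in Ioi (0 : ℝ), ∫ x, a x * g x * cexp (-(a x * z)) ∂μ = ∫ x, g x ∂μ := by
  rw [integral_integral_swap (integrable_prod_mul_mul_cexp_neg_mul ha hre hsector hg)]
  exact integral_congr_ae (hre.mono fun x hx ↦ integral_Ioi_mul_mul_cexp_neg_mul hx (g x))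

end Fubini

section Laplace

variable {ν : ℝ}

theorem exists_forall_mul_rpow_le (hν0 : 0 < ν) (hν1 : ν < 1) {k : ℝ} (hk : 0 < k) (z : ℝ) :
    ∃ C, ∀ t : ℝ, 0 < t → z * t ^ ν ≤ k * t + C := by
  have hlim : Tendsto (fun t : ℝ ↦ z * t ^ (-(1 - ν))) atTop (𝓝 0) := by
    simpa only [mul_zero] using (tendsto_rpow_neg_atTop (sub_pos.2 hν1)).const_mul z
  obtain ⟨T, hT⟩ :=
    ((hlim.eventually (gt_mem_nhds hk)).and (eventually_gt_atTop 0)).exists_forall_of_atTop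
  have hT0 : 0 < T := (hT T le_rfl).2
  refine ⟨|z| * T ^ ν, fun t ht ↦ ?_⟩
  rcases le_total T t with h | h
  · calc z * t ^ ν = z * t ^ (-(1 - ν)) * t := by
          rw [mul_assoc, ← Real.rpow_add_one ht.ne', neg_sub, sub_add_cancel]
      _ ≤ k * t := mul_le_mul_of_nonneg_right (hT t h).1.le ht.le
      _ ≤ k * t + |z| * T ^ ν := le_add_of_nonneg_right (by positivity)
  · calc z * t ^ ν ≤ |z| * T ^ ν := by gcongr; exact le_abs_self z
      _ ≤ k * t + |z| * T ^ ν := le_add_of_nonneg_left (by positivity)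

theorem integrableOn_rpow_mul_exp_neg_mul_mul_exp_mul_rpow (hν0 : 0 < ν) (hν1 : ν < 1) {s : ℝ}
    (hs : -1 < s) {k : ℝ} (hk : 0 < k) (z : ℝ) :
    IntegrableOn (fun t : ℝ ↦ t ^ s * Real.exp (-(k * t)) * Real.exp (z * t ^ ν)) (Ioi 0) := by
  obtain ⟨C, hC⟩ := exists_forall_mul_rpow_le hν0 hν1 (half_pos hk) z
  refine ((integrableOn_rpow_mul_exp_neg_mul_rpow hs one_pos (half_pos hk)).mul_const
    (Real.exp C)).mono' (Measurable.aestronglyMeasurable (by fun_prop)) ?_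
  filter_upwards [ae_restrict_mem measurableSet_Ioi] with t (ht : 0 < t)
  rw [Real.norm_of_nonneg (by positivity), mul_assoc, mul_assoc, ← Real.exp_add, ← Real.exp_add,
    Real.rpow_one]
  refine mul_le_mul_of_nonneg_left (Real.exp_le_exp.2 ?_) (by positivity)
  linarith [hC t ht]

theorem rpow_mul_natCast_add_one_sub_one {t : ℝ} (ht : 0 < t) (n : ℕ) :
    t ^ (ν * (n + 1) - 1) = t ^ (ν - 1) * (t ^ ν) ^ n := by
  rw [← Real.rpow_natCast, ← Real.rpow_mul ht.le, ← Real.rpow_add ht]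
  ring_nf

theorem hasSum_integral_rpow_mul_cexp_neg_mul (hν0 : 0 < ν) (hν1 : ν < 1) {r : ℂ}
    (hr : 0 < r.re) (a : ℂ) :
    HasSum (fun n : ℕ ↦ (-a) ^ n / n.factorial *
        (Gamma (ν * (n + 1) : ℝ) * (1 / r) ^ ((ν * (n + 1) : ℝ) : ℂ)))
      (∫ t in Ioi (0 : ℝ), ((t ^ (ν - 1) : ℝ) : ℂ) * cexp (-(r * t)) *
        cexp (-(a * (t ^ ν : ℝ)))) := by
  let F (n : ℕ) (t : ℝ) : ℂ :=
    ((t ^ (ν - 1) : ℝ) : ℂ) * cexp (-(r * t)) * ((-(a * (t ^ ν : ℝ))) ^ n / n.factorial)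
  let B (n : ℕ) (t : ℝ) : ℝ :=
    t ^ (ν - 1) * Real.exp (-(r.re * t)) * ((‖a‖ * t ^ ν) ^ n / n.factorial)
  have hBsum (t : ℝ) : HasSum (B · t)
      (t ^ (ν - 1) * Real.exp (-(r.re * t)) * Real.exp (‖a‖ * t ^ ν)) := by
    have hexp := NormedSpace.expSeries_div_hasSum_exp (‖a‖ * t ^ ν)
    rw [← Real.exp_eq_exp_ℝ] at hexp
    exact hexp.mul_left _
  have hFsum (t : ℝ) : HasSum (F · t)
      (((t ^ (ν - 1) : ℝ) : ℂ) * cexp (-(r * t)) * cexp (-(a * (t ^ ν : ℝ)))) := by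
    have hexp := NormedSpace.expSeries_div_hasSum_exp (-(a * (t ^ ν : ℝ)))
    rw [← exp_eq_exp_ℂ] at hexp
    exact hexp.mul_left _
  have hbound : ∀ n, ∀ᵐ t ∂volume.restrict (Ioi 0), ‖F n t‖ ≤ B n t := fun n ↦ by
    filter_upwards [ae_restrict_mem measurableSet_Ioi] with t (ht : 0 < t)
    have h1 : 0 ≤ t ^ ν := by positivity
    have h2 : 0 ≤ t ^ (ν - 1) := by positivity
    simp [F, B, norm_exp, abs_of_nonneg h1, abs_of_nonneg h2]
  have hBint : IntegrableOn (fun t ↦ ∑' n, B n t) (Ioi 0) := by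
    simpa only [(hBsum _).tsum_eq] using integrableOn_rpow_mul_exp_neg_mul_mul_exp_mul_rpow
      hν0 hν1 (by linarith) hr ‖a‖
  refine (hasSum_integral_of_dominated_convergence B
    (fun n ↦ Measurable.aestronglyMeasurable (by fun_prop)) hbound
    (.of_forall fun t ↦ (hBsum t).summable) hBint (.of_forall hFsum)).congr_fun fun n ↦ ?_
  rw [← integral_rpow_mul_cexp_neg_mul (by positivity) hr, ← integral_const_mul]
  refine setIntegral_congr_fun measurableSet_Ioi fun t (ht : 0 < t) ↦ ?_
  simp only [F, rpow_mul_natCast_add_one_sub_one ht, ← neg_mul, mul_pow]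
  push_cast
  ring

end Laplace

section Contour

/-- The direction `w = e^{iα}` with `α = πν/(1+ν)`. It encodes the Hankel contour of
`M_ν(z) = (2πi)⁻¹ ∫ σ^{ν-1} exp (σ - z σ^ν) dσ` after it has been collapsed to the two rays
`arg σ = ±(π - α)`: for this `α`, the upper ray `σ = -w⁻¹ t` satisfies `σ^ν = w t^ν`, so that both
exponentials decay along it. -/
noncomputable def wrightDirection (ν : ℝ) : ℂ :=
  cexp ((π * ν / (1 + ν) : ℝ) * I)

variable {ν : ℝ}

theorem Gamma_mul_sin_pi_mul {a : ℝ} (ha : 0 < a) :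
    Real.Gamma a * Real.sin (π * a) = π * (Real.Gamma (1 - a))⁻¹ := by
  have hreflection := Real.Gamma_mul_Gamma_one_sub a
  have hΓ : Real.Gamma a ≠ 0 := (Real.Gamma_pos_of_pos ha).ne'
  rcases eq_or_ne (Real.sin (π * a)) 0 with hsin | hsin
  · have hpole : Real.Gamma (1 - a) = 0 := by simpa [hsin, hΓ] using hreflection
    simp [hsin, hpole]
  · have hΓ' : Real.Gamma (1 - a) ≠ 0 := fun h ↦ by
      rw [h, mul_zero] at hreflection
      exact div_ne_zero Real.pi_ne_zero hsin hreflection.symm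
    rw [eq_div_iff hsin] at hreflection
    rw [eq_mul_inv_iff_mul_eq₀ hΓ', mul_right_comm, hreflection]

theorem pi_mul_div_one_add_mem_Ioo (hν0 : 0 < ν) (hν1 : ν < 1) :
    π * ν / (1 + ν) ∈ Ioo 0 (π / 2) := by
  refine ⟨by positivity, ?_⟩
  rw [div_lt_div_iff₀ (by linarith) two_pos]
  nlinarith [Real.pi_pos]

theorem log_wrightDirection (hν0 : 0 < ν) (hν1 : ν < 1) :
    log (wrightDirection ν) = (π * ν / (1 + ν) : ℝ) * I := by
  obtain ⟨hpos, hlt⟩ := pi_mul_div_one_add_mem_Ioo hν0 hν1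
  have him : ((π * ν / (1 + ν) : ℝ) * I : ℂ).im = π * ν / (1 + ν) := by
    rw [im_ofReal_mul, I_im, mul_one]
  exact log_exp (by rw [him]; linarith [Real.pi_pos]) (by rw [him]; linarith [Real.pi_pos])

theorem wrightDirection_re_pos (hν0 : 0 < ν) (hν1 : ν < 1) : 0 < (wrightDirection ν).re := by
  obtain ⟨hpos, hlt⟩ := pi_mul_div_one_add_mem_Ioo hν0 hν1
  rw [wrightDirection, exp_ofReal_mul_I_re]
  exact Real.cos_pos_of_mem_Ioo ⟨by linarith, hlt⟩

theorem wrightDirection_ne_zero : wrightDirection ν ≠ 0 := exp_ne_zero _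

theorem wrightDirection_inv_re_pos (hν0 : 0 < ν) (hν1 : ν < 1) : 0 < (wrightDirection ν)⁻¹.re := by
  rw [inv_re]
  exact div_pos (wrightDirection_re_pos hν0 hν1) (normSq_pos.2 wrightDirection_ne_zero)

theorem wrightDirection_pow_mul_cpow (hν0 : 0 < ν) (hν1 : ν < 1) (n : ℕ) :
    wrightDirection ν ^ n * wrightDirection ν ^ ((ν * n : ℝ) : ℂ) =
      cexp ((π * (ν * n) : ℝ) * I) := by
  have hν : (1 + ν : ℂ) ≠ 0 := mod_cast (by linarith : 1 + ν ≠ 0)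
  rw [← cpow_natCast, ← cpow_add _ _ wrightDirection_ne_zero,
    cpow_def_of_ne_zero wrightDirection_ne_zero, log_wrightDirection hν0 hν1]
  congr 1
  push_cast
  field_simp

theorem wrightDirection_mul_pow_mul_Gamma_mul_cpow_im (hν0 : 0 < ν) (hν1 : ν < 1) (z : ℝ) (n : ℕ) :
    (wrightDirection ν * ((-(z * wrightDirection ν)) ^ n / n.factorial *
      (Gamma (ν * (n + 1) : ℝ) * (1 / (wrightDirection ν)⁻¹) ^ ((ν * (n + 1) : ℝ) : ℂ)))).im =
    π * ((-z) ^ n / (n.factorial * Real.Gamma (-(ν * n) + 1 - ν))) := by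
  have hrot := wrightDirection_pow_mul_cpow hν0 hν1 (n + 1)
  push_cast at hrot
  calc _ = (((-z) ^ n / n.factorial * Real.Gamma (ν * (n + 1)) : ℝ) *
        cexp ((π * (ν * (n + 1)) : ℝ) * I)).im := by
        push_cast
        rw [← hrot, one_div, inv_inv, ← Gamma_ofReal]
        push_cast
        ring_nf
    _ = (-z) ^ n / n.factorial * (π * (Real.Gamma (1 - ν * (n + 1)))⁻¹) := by
        rw [im_ofReal_mul, exp_ofReal_mul_I_im, mul_assoc, Gamma_mul_sin_pi_mul (by positivity)]
    _ = _ := by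
        rw [show 1 - ν * (n + 1) = -(ν * n) + 1 - ν by ring]
        ring

theorem mWright_eq_im_integral (hν0 : 0 < ν) (hν1 : ν < 1) (z : ℝ) :
    mWright ν z = π⁻¹ * (wrightDirection ν * ∫ t in Ioi (0 : ℝ), ((t ^ (ν - 1) : ℝ) : ℂ) *
      cexp (-((wrightDirection ν)⁻¹ * t)) * cexp (-(z * wrightDirection ν * (t ^ ν : ℝ)))).im := by
  have hsum := ((hasSum_integral_rpow_mul_cexp_neg_mul hν0 hν1
    (wrightDirection_inv_re_pos hν0 hν1) (z * wrightDirection ν)).mul_left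
      (wrightDirection ν)).mapL imCLM
  simp only [imCLM_apply, wrightDirection_mul_pow_mul_Gamma_mul_cpow_im hν0 hν1] at hsum
  rw [← hsum.tsum_eq, tsum_mul_left, inv_mul_cancel_left₀ Real.pi_ne_zero, mWright]

theorem wrightDirection_mul_integral_cexp_mul_cexp (hν0 : 0 < ν) (hν1 : ν < 1) {z : ℝ}
    (hz : 0 ≤ z) :
    wrightDirection ν * ∫ t in Ioi (0 : ℝ), ((t ^ (ν - 1) : ℝ) : ℂ) *
        cexp (-(wrightDirection ν * (t ^ ν : ℝ))) * cexp (-(z * wrightDirection ν * (t ^ ν : ℝ))) =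
      ((ν * (z + 1))⁻¹ : ℝ) := by
  have hre : 0 < ((z + 1 : ℝ) * wrightDirection ν : ℂ).re := by
    rw [re_ofReal_mul]
    exact mul_pos (by linarith) (wrightDirection_re_pos hν0 hν1)
  have hint := integral_rpow_mul_cexp_neg_mul_rpow hν0 hν0 hre
  have hw := wrightDirection_ne_zero (ν := ν)
  have hz' : (z + 1 : ℂ) ≠ 0 := mod_cast (by linarith : z + 1 ≠ 0)
  simp only [div_self hν0.ne', ofReal_one, Gamma_one, cpow_one, mul_one] at hint
  have hexp (s : ℝ) : cexp (-(wrightDirection ν * s)) * cexp (-(z * wrightDirection ν * s)) =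
      cexp (-((z + 1 : ℝ) * wrightDirection ν * s)) := by
    rw [← exp_add]
    push_cast
    ring_nf
  simp_rw [mul_assoc _ (cexp _) (cexp _), hexp, hint]
  push_cast
  field_simp

theorem integrableOn_mul_cexp_neg_mul_rpow {g : ℝ → ℂ} (hg : IntegrableOn g (Ioi 0)) {a : ℂ}
    (ha : 0 ≤ a.re) :
    IntegrableOn (fun t : ℝ ↦ g t * cexp (-(a * (t ^ ν : ℝ)))) (Ioi 0) := by
  refine Integrable.mono hg (hg.aestronglyMeasurable.mul
    (Measurable.aestronglyMeasurable (by fun_prop))) ?_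
  filter_upwards [ae_restrict_mem measurableSet_Ioi] with t (ht : 0 < t)
  rw [norm_mul, norm_exp, neg_re, re_mul_ofReal]
  exact mul_le_of_le_one_right (norm_nonneg _)
    (Real.exp_le_one_iff.2 (neg_nonpos.2 (by positivity)))

theorem mWright_eq_im_integral_frullaniIntegrand (hν0 : 0 < ν) (hν1 : ν < 1) {z : ℝ}
    (hz : 0 ≤ z) :
    mWright ν z = π⁻¹ * (∫ t in Ioi (0 : ℝ), wrightDirection ν * (t ^ ν : ℝ) *
      frullaniIntegrand ν (wrightDirection ν)⁻¹ (wrightDirection ν) t *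
        cexp (-(wrightDirection ν * (t ^ ν : ℝ) * z))).im := by
  have hre := wrightDirection_re_pos hν0 hν1
  have hν : -1 < ν - 1 := by linarith
  have hzw : 0 ≤ (z * wrightDirection ν : ℂ).re := by
    rw [re_ofReal_mul]
    positivity
  have hlin := integrableOn_mul_cexp_neg_mul_rpow (ν := ν)
    (integrableOn_rpow_mul_cexp_neg_mul_rpow hν one_pos (wrightDirection_inv_re_pos hν0 hν1)) hzw
  have hpow := integrableOn_mul_cexp_neg_mul_rpow (ν := ν)
    (integrableOn_rpow_mul_cexp_neg_mul_rpow hν hν0 hre) hzw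
  simp only [Real.rpow_one] at hlin
  have hsub : ∫ t in Ioi (0 : ℝ), wrightDirection ν * (t ^ ν : ℝ) *
        frullaniIntegrand ν (wrightDirection ν)⁻¹ (wrightDirection ν) t *
          cexp (-(wrightDirection ν * (t ^ ν : ℝ) * z)) =
      wrightDirection ν * (∫ t in Ioi (0 : ℝ), ((t ^ (ν - 1) : ℝ) : ℂ) *
        cexp (-((wrightDirection ν)⁻¹ * t)) * cexp (-(z * wrightDirection ν * (t ^ ν : ℝ)))) -
      ((ν * (z + 1))⁻¹ : ℝ) := by
    rw [← wrightDirection_mul_integral_cexp_mul_cexp hν0 hν1 hz, ← mul_sub,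
      ← integral_sub hlin hpow, ← integral_const_mul]
    refine setIntegral_congr_fun measurableSet_Ioi fun t (ht : 0 < t) ↦ ?_
    simp only [Real.rpow_sub_one ht.ne', frullaniIntegrand]
    push_cast
    ring_nf
  rw [mWright_eq_im_integral hν0 hν1, hsub, sub_im, ofReal_im, sub_zero]

theorem integral_frullaniIntegrand_wrightDirection_im (hν0 : 0 < ν) (hν1 : ν < 1) :
    (∫ t in Ioi (0 : ℝ),
      frullaniIntegrand ν (wrightDirection ν)⁻¹ (wrightDirection ν) t).im = π := by
  rw [integral_frullaniIntegrand hν0 (wrightDirection_inv_re_pos hν0 hν1)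
    (wrightDirection_re_pos hν0 hν1), log_inv_of_re_pos (wrightDirection_re_pos hν0 hν1),
    log_wrightDirection hν0 hν1]
  have hν : 1 + ν ≠ 0 := by linarith
  simp only [← ofReal_one, ← ofReal_sub, ← ofReal_mul, sub_im, add_im, im_ofReal_mul,
    neg_im, I_im, ofReal_im]
  field_simp
  ring

theorem integral_Ioi_mWright (hν0 : 0 < ν) (hν1 : ν < 1) : ∫ z in Ioi (0 : ℝ), mWright ν z = 1 := by
  have hre := wrightDirection_re_pos hν0 hν1
  have hrate : AEStronglyMeasurable (fun t : ℝ ↦ wrightDirection ν * (t ^ ν : ℝ))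
      (volume.restrict (Ioi 0)) :=
    Measurable.aestronglyMeasurable (by fun_prop)
  have hrate_re : ∀ᵐ t ∂volume.restrict (Ioi 0), 0 < (wrightDirection ν * (t ^ ν : ℝ)).re := by
    filter_upwards [ae_restrict_mem measurableSet_Ioi] with t (ht : 0 < t)
    rw [re_mul_ofReal]
    positivity
  have hsector : ∀ᵐ t ∂volume.restrict (Ioi 0),
      ‖wrightDirection ν * (t ^ ν : ℝ)‖ ≤
        ‖wrightDirection ν‖ / (wrightDirection ν).re * (wrightDirection ν * (t ^ ν : ℝ)).re := by
    filter_upwards [ae_restrict_mem measurableSet_Ioi] with t (ht : 0 < t)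
    rw [norm_mul, norm_real, Real.norm_of_nonneg (by positivity), re_mul_ofReal]
    exact le_of_eq (by field_simp)
  have hint := integrableOn_frullaniIntegrand hν0 (wrightDirection_inv_re_pos hν0 hν1) hre
  have hprod :=
    (integrable_prod_mul_mul_cexp_neg_mul hrate hrate_re hsector hint).integral_prod_left
  calc ∫ z in Ioi (0 : ℝ), mWright ν z
      = ∫ z in Ioi (0 : ℝ), π⁻¹ * imCLM (∫ t in Ioi (0 : ℝ), wrightDirection ν * (t ^ ν : ℝ) *
          frullaniIntegrand ν (wrightDirection ν)⁻¹ (wrightDirection ν) t *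
            cexp (-(wrightDirection ν * (t ^ ν : ℝ) * z))) :=
        setIntegral_congr_fun measurableSet_Ioi fun z (hz : 0 < z) ↦
          mWright_eq_im_integral_frullaniIntegrand hν0 hν1 hz.le
    _ = π⁻¹ * (∫ t in Ioi (0 : ℝ),
          frullaniIntegrand ν (wrightDirection ν)⁻¹ (wrightDirection ν) t).im := by
        rw [integral_const_mul, imCLM.integral_comp_comm hprod,
          integral_Ioi_integral_mul_mul_cexp_neg_mul hrate hrate_re hsector hint, imCLM_apply]
    _ = 1 := by
        rw [integral_frullaniIntegrand_wrightDirection_im hν0 hν1,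
          inv_mul_cancel₀ Real.pi_ne_zero]

end Contour

section ApproximateIdentity

variable {ι V E : Type*} [NormedAddCommGroup V] [NormedSpace ℝ V] [MeasurableSpace V]
  [BorelSpace V] [FiniteDimensional ℝ V] {μ : Measure V} [μ.IsAddHaarMeasure]
  [NormedAddCommGroup E] [NormedSpace ℝ E] {l : Filter ι} [l.IsCountablyGenerated] {c : ι → ℝ}
  {φ : V → ℝ} {f : V → E} {M : ℝ} {x : V}

theorem tendsto_integral_smul_comp_sub_smul (hc : Tendsto c l (𝓝[≠] 0)) (hφ : Integrable φ μ)
    (hf : AEStronglyMeasurable f μ) (hM : ∀ᵐ y ∂μ, ‖f y‖ ≤ M) (hfx : ContinuousAt f x) :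
    Tendsto (fun i ↦ ∫ s, φ s • f (x - c i • s) ∂μ) l (𝓝 (∫ s, φ s • f x ∂μ)) := by
  have hqmp : ∀ᶠ i in l, Measure.QuasiMeasurePreserving (fun s ↦ x - c i • s) μ μ := by
    filter_upwards [hc.eventually self_mem_nhdsWithin] with i hi
    exact (quasiMeasurePreserving_sub_left_of_right_invariant μ x).comp
      (Measure.quasiMeasurePreserving_smul μ hi)
  refine tendsto_integral_filter_of_dominated_convergence (fun s ↦ ‖φ s‖ * M)
    (hqmp.mono fun i hi ↦ hφ.aestronglyMeasurable.smul (hf.comp_quasiMeasurePreserving hi))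
    (hqmp.mono fun i hi ↦ ?_) (hφ.norm.mul_const M) (.of_forall fun s ↦ ?_)
  · filter_upwards [hi.ae hM] with s hs
    rw [norm_smul]
    gcongr
  · have harg : Tendsto (fun i ↦ x - c i • s) l (𝓝 x) := by
      simpa using tendsto_const_nhds.sub ((tendsto_nhds_of_tendsto_nhdsWithin hc).smul_const s)
    exact (hfx.tendsto.comp harg).const_smul (φ s)

theorem tendsto_integral_comp_inv_smul_smul_comp_sub [CompleteSpace E]
    (hc : Tendsto c l (𝓝[>] 0)) (hφ : Integrable φ μ) (hf : AEStronglyMeasurable f μ)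
    (hM : ∀ᵐ y ∂μ, ‖f y‖ ≤ M) (hfx : ContinuousAt f x) :
    Tendsto (fun i ↦ ∫ y, ((c i ^ Module.finrank ℝ V)⁻¹ * φ ((c i)⁻¹ • y)) • f (x - y) ∂μ) l
      (𝓝 ((∫ s, φ s ∂μ) • f x)) := by
  rw [← integral_smul_const]
  refine (tendsto_integral_smul_comp_sub_smul (hc.mono_right (nhdsGT_le_nhdsNE 0)) hφ hf hM
    hfx).congr' ?_
  filter_upwards [hc.eventually self_mem_nhdsWithin] with i (hi : 0 < c i)
  have hscale := Measure.integral_comp_inv_smul_of_nonneg μ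
    (fun s ↦ ((c i ^ Module.finrank ℝ V)⁻¹ * φ s) • f (x - c i • s)) hi.le
  simp only [smul_inv_smul₀ hi.ne'] at hscale
  rw [hscale, ← integral_smul]
  simp only [mul_smul, smul_inv_smul₀ (pow_pos hi _).ne']

end ApproximateIdentity

theorem integral_mWright_abs {ν : ℝ} (hν0 : 0 < ν) (hν1 : ν < 1) : ∫ s, mWright ν |s| = 2 := by
  rw [integral_comp_abs, integral_Ioi_mWright hν0 hν1, mul_one]

theorem cauchy_solution_attains_initial_datum_general {E : Type*} [NormedAddCommGroup E]
    [NormedSpace ℝ E] [CompleteSpace E] {ν : ℝ} (hν0 : 0 < ν) (hν1 : ν < 1) {f : ℝ → E}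
    (hf : AEStronglyMeasurable f) {M : ℝ} (hM : ∀ᵐ y, ‖f y‖ ≤ M) {x : ℝ} (hfx : ContinuousAt f x) :
    Tendsto (fun t : ℝ ↦ ∫ ξ : ℝ, (1 / (2 * t ^ ν) * mWright ν (|ξ| / t ^ ν)) • f (x - ξ))
      (𝓝[>] 0) (𝓝 (f x)) := by
  have hint : Integrable (fun s ↦ mWright ν |s|) :=
    .of_integral_ne_zero (by rw [integral_mWright_abs hν0 hν1]; exact two_ne_zero)
  have hmass : ∫ s, 1 / 2 * mWright ν |s| = 1 := by
    rw [integral_const_mul, integral_mWright_abs hν0 hν1, one_div_mul_cancel two_ne_zero]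
  have hscale : Tendsto (fun t : ℝ ↦ t ^ ν) (𝓝[>] 0) (𝓝[>] 0) := by
    have hcont := (Real.continuousAt_rpow_const 0 ν (.inr hν0.le)).tendsto
    rw [Real.zero_rpow hν0.ne'] at hcont
    exact tendsto_nhdsWithin_iff.2 ⟨hcont.mono_left nhdsWithin_le_nhds,
      eventually_mem_nhdsWithin.mono fun t ht ↦ Real.rpow_pos_of_pos ht ν⟩
  have hlim := tendsto_integral_comp_inv_smul_smul_comp_sub hscale (hint.const_mul (1 / 2)) hf hM
    hfx
  rw [hmass, one_smul] at hlim
  refine hlim.congr' ?_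
  filter_upwards [self_mem_nhdsWithin] with t (ht : 0 < t)
  have hc : 0 < t ^ ν := by positivity
  simp only [Module.finrank_self, pow_one, smul_eq_mul, abs_mul, abs_inv, abs_of_pos hc]
  congr! 3
  field_simp

/-- The convolution solution of the Cauchy problem attains the initial datum:
for `0 < ν < 1` and `f : ℝ → ℝ` bounded and continuous, the space convolution
`u(x,t) = ∫ (1/(2 t^ν)) M_ν(|ξ|/t^ν) f(x-ξ) dξ` tends to `f(x)` as `t → 0⁺`,
for every `x ∈ ℝ`. -/
theorem cauchy_solution_attains_initial_datum
    (ν : ℝ) (hν0 : 0 < ν) (hν1 : ν < 1)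
    (f : ℝ → ℝ) (hfc : Continuous f) (M : ℝ) (hM : ∀ x, |f x| ≤ M) (x : ℝ) :
    Filter.Tendsto
      (fun t : ℝ => ∫ ξ : ℝ, 1 / (2 * t ^ ν) * mWright ν (|ξ| / t ^ ν) * f (x - ξ))
      (nhdsWithin 0 (Set.Ioi 0)) (nhds (f x)) :=
  cauchy_solution_attains_initial_datum_general hν0 hν1 hfc.aestronglyMeasurable (.of_forall hM)
    hfc.continuousAt
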